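/- (Optimal-value gap bound.) Let M = (T,R) and M̄ = (T',R') be two finite discounted MDPs on (S, A, γ) whose rewards are both nonnegative (R s a ≥ 0 and R' s a ≥ 0 for all (s,a)). Then for every state s0 ∈ S, the optimal values satisfy |V*_M(s0) − V*_{M̄}(s0)| ≤ max_{a∈A} Δ_{s0,a}(M, M̄). -/

import Mathlib

open Finset

variable {S A : Type*}

/-- Max over the (finite, nonempty) action space. -/
noncomputable def qmax [Fintype A] [Nonempty A] (f : A → ℝ) : ℝ :=
  Finset.univ.sup' Finset.univ_nonempty f

/-- Bellman operator `Γ_M` of the MDP `M = (T, R)` with discount `γ`. -/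
noncomputable def bellman [Fintype S] [Fintype A] [Nonempty A]
    (γ : ℝ) (T : S → A → S → ℝ) (R : S → A → ℝ)
    (f : S → A → ℝ) : S → A → ℝ :=
  fun s a => R s a + γ * ∑ s' : S, T s a s' * qmax (f s')

/-- `D_{s,a}(M‖M̄)`, where `Vbar` is the optimal value function of `M̄`. -/
noncomputable def Dop [Fintype S]
    (γ : ℝ) (T : S → A → S → ℝ) (R : S → A → ℝ)
    (T' : S → A → S → ℝ) (R' : S → A → ℝ) (Vbar : S → ℝ) : S → A → ℝ :=
  fun s a => |R s a - R' s a| + γ * ∑ s' : S, Vbar s' * |T s a s' - T' s a s'|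

/-- The operator `L_{M‖M̄}`, where `Vbar` is the optimal value function of `M̄`. -/
noncomputable def Lop [Fintype S] [Fintype A] [Nonempty A]
    (γ : ℝ) (T : S → A → S → ℝ) (R : S → A → ℝ)
    (T' : S → A → S → ℝ) (R' : S → A → ℝ) (Vbar : S → ℝ)
    (f : S → A → ℝ) : S → A → ℝ :=
  fun s a => Dop γ T R T' R' Vbar s a + γ * ∑ s' : S, T s a s' * qmax (f s')

/-!
`L_{M‖M̄}` is itself a Bellman operator, that of the MDP with kernel `T` and reward `D(M‖M̄)`.
A Bellman operator obeys a comparison principle: a subsolution `f ≤ Γ f` lies below every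
supersolution `Γ g ≤ g`, because `max (f - g) ≤ γ * max (f - g)` as soon as the maximum is positive.
Comparing `0` with `Q*_M̄` gives `V*_M̄ ≥ 0`. Splitting
`T V - T' V' = T (V - V') + (T - T') V'` then shows that `|Q*_M - Q*_M̄|` is a subsolution
of `L_{M‖M̄}`, so it lies below `d(M‖M̄)`; by symmetry it also lies below `d(M̄‖M)`.
-/

theorem abs_sum_mul_sub_sum_mul_le {ι 𝕜 : Type*} [CommRing 𝕜] [LinearOrder 𝕜]
    [IsOrderedRing 𝕜] (t : Finset ι) {p q x y : ι → 𝕜}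
    (hp : ∀ i ∈ t, 0 ≤ p i) (hy : ∀ i ∈ t, 0 ≤ y i) :
    |∑ i ∈ t, p i * x i - ∑ i ∈ t, q i * y i| ≤
      ∑ i ∈ t, y i * |p i - q i| + ∑ i ∈ t, p i * |x i - y i| := by
  rw [← sum_sub_distrib, ← sum_add_distrib]
  refine (abs_sum_le_sum_abs _ _).trans (sum_le_sum fun i hi => ?_)
  calc |p i * x i - q i * y i|
      = |y i * (p i - q i) + p i * (x i - y i)| := by ring_nf
    _ ≤ |y i * (p i - q i)| + |p i * (x i - y i)| := abs_add_le _ _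
    _ = y i * |p i - q i| + p i * |x i - y i| := by
      rw [abs_mul, abs_mul, abs_of_nonneg (hp i hi), abs_of_nonneg (hy i hi)]

/-- Substochastic transition kernels: the missing mass `1 - ∑ s', T s a s'` is the probability that
the process terminates when action `a` is played in state `s`. -/
structure IsSubstochastic [Fintype S] (T : S → A → S → ℝ) : Prop where
  nonneg : ∀ s a s', 0 ≤ T s a s'
  sum_le_one : ∀ s a, ∑ s', T s a s' ≤ 1

section qmax

variable [Fintype A] [Nonempty A] {f g : A → ℝ}

theorem le_qmax (f : A → ℝ) (a : A) : f a ≤ qmax f :=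
  le_sup' f (mem_univ a)

theorem qmax_le {c : ℝ} (h : ∀ a, f a ≤ c) : qmax f ≤ c :=
  sup'_le _ _ fun a _ => h a

theorem qmax_mono (h : f ≤ g) : qmax f ≤ qmax g :=
  qmax_le fun a => (h a).trans (le_qmax g a)

theorem qmax_nonneg (h : 0 ≤ f) : 0 ≤ qmax f :=
  (h (Classical.arbitrary A)).trans (le_qmax f _)

theorem qmax_sub_qmax_le {c : ℝ} (h : ∀ a, f a - g a ≤ c) : qmax f - qmax g ≤ c :=
  sub_le_iff_le_add.2 <| qmax_le fun a =>
    (sub_le_iff_le_add.1 (h a)).trans (by gcongr; exact le_qmax g a)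

theorem abs_qmax_sub_qmax_le (f g : A → ℝ) :
    |qmax f - qmax g| ≤ qmax fun a => |f a - g a| := by
  refine abs_sub_le_iff.2 ⟨qmax_sub_qmax_le fun a => ?_, qmax_sub_qmax_le fun a => ?_⟩
  · exact (le_abs_self _).trans (le_qmax (fun a => |f a - g a|) a)
  · exact (neg_sub (f a) (g a) ▸ neg_le_abs _).trans (le_qmax (fun a => |f a - g a|) a)

end qmax

section bellman

variable [Fintype S] [Fintype A] [Nonempty A] {γ : ℝ} {T T' : S → A → S → ℝ} {R R' : S → A → ℝ}

theorem bellman_sub_bellman_le {f g : S → A → ℝ} {c : ℝ} (hγ : 0 ≤ γ) (hT : IsSubstochastic T)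
    (hc : 0 ≤ c) (h : ∀ s a, f s a - g s a ≤ c) (s : S) (a : A) :
    bellman γ T R f s a - bellman γ T R g s a ≤ γ * c := by
  have expected_le : ∑ s', T s a s' * (qmax (f s') - qmax (g s')) ≤ c :=
    calc ∑ s', T s a s' * (qmax (f s') - qmax (g s'))
        ≤ ∑ s', T s a s' * c := sum_le_sum fun s' _ =>
          mul_le_mul_of_nonneg_left (qmax_sub_qmax_le (h s')) (hT.nonneg s a s')
      _ = (∑ s', T s a s') * c := (sum_mul _ _ _).symm
      _ ≤ c := mul_le_of_le_one_left hc (hT.sum_le_one s a)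
  calc bellman γ T R f s a - bellman γ T R g s a
      = γ * ∑ s', T s a s' * (qmax (f s') - qmax (g s')) := by
        simp only [bellman, mul_sub, sum_sub_distrib]
        ring
    _ ≤ γ * c := mul_le_mul_of_nonneg_left expected_le hγ

theorem le_of_le_bellman_of_bellman_le {f g : S → A → ℝ} (hγ0 : 0 ≤ γ) (hγ1 : γ < 1)
    (hT : IsSubstochastic T) (hf : f ≤ bellman γ T R f) (hg : bellman γ T R g ≤ g) : f ≤ g := by
  intro s a
  have : Nonempty S := ⟨s⟩
  obtain ⟨⟨s₁, a₁⟩, hmax⟩ := Finite.exists_max fun p : S × A => f p.1 p.2 - g p.1 p.2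
  suffices max_nonpos : f s₁ a₁ - g s₁ a₁ ≤ 0 from sub_nonpos.1 ((hmax (s, a)).trans max_nonpos)
  by_contra! max_pos
  have max_le : f s₁ a₁ - g s₁ a₁ ≤ γ * (f s₁ a₁ - g s₁ a₁) :=
    (sub_le_sub (hf s₁ a₁) (hg s₁ a₁)).trans <|
      bellman_sub_bellman_le hγ0 hT max_pos.le (fun s a => hmax (s, a)) s₁ a₁
  exact max_le.not_gt (mul_lt_of_lt_one_left max_pos hγ1)

theorem nonneg_of_bellman_le {Q : S → A → ℝ} (hγ0 : 0 ≤ γ) (hγ1 : γ < 1)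
    (hT : IsSubstochastic T) (hR : 0 ≤ R) (hQ : bellman γ T R Q ≤ Q) : 0 ≤ Q := by
  refine le_of_le_bellman_of_bellman_le hγ0 hγ1 hT (fun s a => ?_) hQ
  have expected_nonneg : 0 ≤ ∑ s', T s a s' * qmax (0 : A → ℝ) :=
    sum_nonneg fun s' _ => mul_nonneg (hT.nonneg s a s') (qmax_nonneg le_rfl)
  exact add_nonneg (hR s a) (mul_nonneg hγ0 expected_nonneg)

theorem Lop_eq_bellman (γ : ℝ) (T T' : S → A → S → ℝ) (R R' : S → A → ℝ) (V : S → ℝ) :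
    Lop γ T R T' R' V = bellman γ T (Dop γ T R T' R' V) :=
  rfl

theorem abs_bellman_sub_bellman_le_Lop {f g : S → A → ℝ} (hγ : 0 ≤ γ)
    (hT : ∀ s a s', 0 ≤ T s a s') (hg : ∀ s, 0 ≤ qmax (g s)) (s : S) (a : A) :
    |bellman γ T R f s a - bellman γ T' R' g s a| ≤
      Lop γ T R T' R' (fun s => qmax (g s)) (fun s a => |f s a - g s a|) s a := by
  have expected_gap : |∑ s', T s a s' * qmax (f s') - ∑ s', T' s a s' * qmax (g s')| ≤
      ∑ s', qmax (g s') * |T s a s' - T' s a s'| +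
        ∑ s', T s a s' * qmax fun a' => |f s' a' - g s' a'| := by
    refine (abs_sum_mul_sub_sum_mul_le univ (fun s' _ => hT s a s') fun s' _ => hg s').trans ?_
    gcongr with s'
    · exact hT s a s'
    · exact abs_qmax_sub_qmax_le (f s') (g s')
  calc |bellman γ T R f s a - bellman γ T' R' g s a|
      = |(R s a - R' s a) +
          γ * (∑ s', T s a s' * qmax (f s') - ∑ s', T' s a s' * qmax (g s'))| := by
        simp only [bellman]
        ring_nf
    _ ≤ |R s a - R' s a| +
          γ * |∑ s', T s a s' * qmax (f s') - ∑ s', T' s a s' * qmax (g s')| := by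
        grw [abs_add_le, abs_mul, abs_of_nonneg hγ]
    _ ≤ |R s a - R' s a| + γ * (∑ s', qmax (g s') * |T s a s' - T' s a s'| +
          ∑ s', T s a s' * qmax fun a' => |f s' a' - g s' a'|) := by gcongr
    _ = Lop γ T R T' R' (fun s => qmax (g s)) (fun s a => |f s a - g s a|) s a := by
        simp only [Lop, Dop]
        ring

theorem abs_sub_le_of_Lop_le {Q Q' d : S → A → ℝ} (hγ0 : 0 ≤ γ) (hγ1 : γ < 1)
    (hT : IsSubstochastic T) (hQ : bellman γ T R Q = Q) (hQ' : bellman γ T' R' Q' = Q')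
    (hV' : ∀ s, 0 ≤ qmax (Q' s)) (hd : Lop γ T R T' R' (fun s => qmax (Q' s)) d ≤ d)
    (s : S) (a : A) : |Q s a - Q' s a| ≤ d s a := by
  have gap_le_Lop : (fun s a => |Q s a - Q' s a|) ≤
      Lop γ T R T' R' (fun s => qmax (Q' s)) fun s a => |Q s a - Q' s a| := fun s a => by
    simpa only [hQ, hQ'] using
      abs_bellman_sub_bellman_le_Lop (R := R) (T' := T') (R' := R') (f := Q) hγ0 hT.nonneg hV' s a
  rw [Lop_eq_bellman] at gap_le_Lop hd
  exact le_of_le_bellman_of_bellman_le hγ0 hγ1 hT gap_le_Lop hd s a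

theorem optimal_value_gap_bound_general {Q Q' d d' : S → A → ℝ} (hγ0 : 0 ≤ γ) (hγ1 : γ < 1)
    (hT : IsSubstochastic T) (hT' : IsSubstochastic T')
    (hQ : bellman γ T R Q = Q) (hQ' : bellman γ T' R' Q' = Q')
    (hV : ∀ s, 0 ≤ qmax (Q s)) (hV' : ∀ s, 0 ≤ qmax (Q' s))
    (hd : Lop γ T R T' R' (fun s => qmax (Q' s)) d ≤ d)
    (hd' : Lop γ T' R' T R (fun s => qmax (Q s)) d' ≤ d') (s : S) :
    |qmax (Q s) - qmax (Q' s)| ≤ qmax fun a => min (d s a) (d' s a) := by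
  refine (abs_qmax_sub_qmax_le (Q s) (Q' s)).trans (qmax_mono fun a => le_min ?_ ?_)
  · exact abs_sub_le_of_Lop_le hγ0 hγ1 hT hQ hQ' hV' hd s a
  · rw [abs_sub_comm]
    exact abs_sub_le_of_Lop_le hγ0 hγ1 hT' hQ' hQ hV hd' s a

end bellman

/-- Optimal-value gap bound: `|V*_M(s0) − V*_{M̄}(s0)| ≤ max_{a} Δ_{s0,a}(M, M̄)`. -/
theorem optimal_value_gap_bound
    [Fintype S] [Nonempty S] [Fintype A] [Nonempty A]
    (γ : ℝ) (hγ0 : 0 ≤ γ) (hγ1 : γ < 1)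
    (T : S → A → S → ℝ) (R : S → A → ℝ)
    (T' : S → A → S → ℝ) (R' : S → A → ℝ)
    (hT : ∀ s a s', 0 ≤ T s a s') (hTsum : ∀ s a, ∑ s' : S, T s a s' = 1)
    (hT' : ∀ s a s', 0 ≤ T' s a s') (hTsum' : ∀ s a, ∑ s' : S, T' s a s' = 1)
    (hR : ∀ s a, 0 ≤ R s a) (hR' : ∀ s a, 0 ≤ R' s a)
    -- `QstarM` and `Qstarbar` are the (unique) fixed points of the Bellman operators of
    -- `M = (T, R)` and `M̄ = (T', R')`, giving `V*_M = fun s => qmax (QstarM s)` etc.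
    (QstarM : S → A → ℝ) (hQstarM : ∀ s a, QstarM s a = bellman γ T R QstarM s a)
    (Qstarbar : S → A → ℝ)
    (hQstarbar : ∀ s a, Qstarbar s a = bellman γ T' R' Qstarbar s a)
    -- `d1 = d(M‖M̄)` and `d2 = d(M̄‖M)` are the (unique) fixed points of `L_{M‖M̄}` and
    -- `L_{M̄‖M}`; the pseudo-metric is `Δ_{s,a}(M,M̄) = min (d1 s a) (d2 s a)`.
    (d1 : S → A → ℝ)
    (hd1 : ∀ s a, d1 s a = Lop γ T R T' R' (fun s => qmax (Qstarbar s)) d1 s a)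
    (d2 : S → A → ℝ)
    (hd2 : ∀ s a, d2 s a = Lop γ T' R' T R (fun s => qmax (QstarM s)) d2 s a)
    (s0 : S) :
    |qmax (QstarM s0) - qmax (Qstarbar s0)| ≤
      qmax (fun a => min (d1 s0 a) (d2 s0 a)) := by
  have subT : IsSubstochastic T := ⟨hT, fun s a => (hTsum s a).le⟩
  have subT' : IsSubstochastic T' := ⟨hT', fun s a => (hTsum' s a).le⟩
  have fixQ : bellman γ T R QstarM = QstarM := funext₂ fun s a => (hQstarM s a).symm
  have fixQ' : bellman γ T' R' Qstarbar = Qstarbar := funext₂ fun s a => (hQstarbar s a).symm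
  exact optimal_value_gap_bound_general hγ0 hγ1 subT subT' fixQ fixQ'
    (fun s => qmax_nonneg (nonneg_of_bellman_le hγ0 hγ1 subT hR fixQ.le s))
    (fun s => qmax_nonneg (nonneg_of_bellman_le hγ0 hγ1 subT' hR' fixQ'.le s))
    (fun s a => (hd1 s a).ge) (fun s a => (hd2 s a).ge) s0
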